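/- Every interval matrix is totally unimodular: if X ∈ {0,1}^{m×n} is an interval matrix, then every square submatrix of X (obtained by selecting any set of rows and an equally sized set of columns) has determinant equal to −1, 0, or 1. -/

import Mathlib

noncomputable section

/-- A 0–1 matrix is an interval matrix if each column's set of rows with entry 1 is a
block of consecutive indices: entries are 0 or 1, and the support of each column is
order-convex. -/
def IsIntervalMatrix {m n : ℕ} (X : Matrix (Fin m) (Fin n) ℤ) : Prop :=
  (∀ i j, X i j = 0 ∨ X i j = 1) ∧
  ∀ j i₁ i₂ i₃, i₁ ≤ i₂ → i₂ ≤ i₃ → X i₁ j = 1 → X i₃ j = 1 → X i₂ j = 1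

theorem interval_det_aux : ∀ (k : ℕ) (f a b : Fin k → ℕ),
    (Matrix.of fun i j => if a j ≤ f i ∧ f i < b j then (1 : ℤ) else 0).det ∈
      ({-1, 0, 1} : Set ℤ) := by
  intro k
  induction k with
  | zero => intro f a b; simp
  | succ k ih =>
    intro f a b
    obtain ⟨i0, -, hi0⟩ := Finset.exists_min_image Finset.univ f ⟨0, Finset.mem_univ _⟩
    by_cases hne : ∃ j, a j ≤ f i0 ∧ f i0 < b j
    swap
    · rw [Matrix.det_eq_zero_of_row_eq_zero i0]
      · simp
      · intro j
        have : ¬ (a j ≤ f i0 ∧ f i0 < b j) := fun h => hne ⟨j, h⟩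
        simp [this]
    obtain ⟨j1, hj1⟩ := hne
    obtain ⟨j0, hj0m, hj0⟩ := Finset.exists_min_image
      (Finset.univ.filter fun j => a j ≤ f i0 ∧ f i0 < b j) b ⟨j1, by simpa using hj1⟩
    have hj0p : a j0 ≤ f i0 ∧ f i0 < b j0 := by simpa using hj0m
    have hj0' : ∀ j, a j ≤ f i0 → f i0 < b j → b j0 ≤ b j := fun j h1 h2 =>
      hj0 j (by simp [h1, h2])
    let a' : Fin (k+1) → ℕ := fun j =>
      if j ≠ j0 ∧ a j ≤ f i0 ∧ f i0 < b j then b j0 else a j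
    have key : (Matrix.of fun i j => if a j ≤ f i ∧ f i < b j then (1 : ℤ) else 0).det =
        (Matrix.of fun i j => if a' j ≤ f i ∧ f i < b j then (1 : ℤ) else 0).det := by
      rw [← Matrix.det_transpose, ← Matrix.det_transpose (Matrix.of _)]
      refine Matrix.det_eq_of_forall_row_eq_smul_add_const
        (fun j => if j ≠ j0 ∧ a j ≤ f i0 ∧ f i0 < b j then 1 else 0) j0 (by simp) ?_
      intro j i
      have hi := hi0 i (Finset.mem_univ _)
      have hb := hj0' j
      simp only [Matrix.transpose_apply, Matrix.of_apply, a']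
      by_cases h : j ≠ j0 ∧ a j ≤ f i0 ∧ f i0 < b j
      · simp only [h, ne_eq, not_true_eq_false, false_and, if_false]
        have := hb h.2.1 h.2.2
        split_ifs <;> first | rfl | omega
      · simp [h]
    rw [key, Matrix.det_succ_row _ i0, Finset.sum_eq_single j0]
    · have h0 : a' j0 ≤ f i0 ∧ f i0 < b j0 := by simpa [a'] using hj0p
      have := ih (fun i => f (i0.succAbove i)) (fun j => a' (j0.succAbove j))
        (fun j => b (j0.succAbove j))
      have e : ((Matrix.of fun i j => if a' j ≤ f i ∧ f i < b j then (1 : ℤ) else 0).submatrix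
          i0.succAbove j0.succAbove) = Matrix.of fun i j =>
            if a' (j0.succAbove j) ≤ f (i0.succAbove i) ∧
              f (i0.succAbove i) < b (j0.succAbove j) then (1 : ℤ) else 0 := rfl
      rw [e, Matrix.of_apply, if_pos h0]
      simp only [Set.mem_insert_iff, Set.mem_singleton_iff] at this ⊢
      rcases neg_one_pow_eq_or ℤ ((i0 : ℕ) + (j0 : ℕ)) with h | h <;> rw [h] <;> omega
    · intro j _ hj
      have : ¬ (a' j ≤ f i0 ∧ f i0 < b j) := by
        simp only [a']
        by_cases h : j ≠ j0 ∧ a j ≤ f i0 ∧ f i0 < b j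
        · rw [if_pos h]; omega
        · rw [if_neg h]; exact fun h' => h ⟨hj, h'⟩
      simp [this]
    · simp

theorem interval_exists_aux {m n : ℕ} (X : Matrix (Fin m) (Fin n) ℤ)
    (hX : IsIntervalMatrix X) (j : Fin n) :
    ∃ a b : ℕ, ∀ i, X i j = if a ≤ (i : ℕ) ∧ (i : ℕ) < b then 1 else 0 := by
  obtain ⟨h01, hc⟩ := hX
  by_cases h : ∃ i, X i j = 1
  · obtain ⟨i, hi⟩ := h
    have hs : (Finset.univ.filter fun i => X i j = 1).Nonempty := ⟨i, by simpa using hi⟩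
    obtain ⟨p, hp, hp'⟩ := Finset.exists_min_image _ (fun i => i) hs
    obtain ⟨q, hq, hq'⟩ := Finset.exists_max_image _ (fun i => i) hs
    simp only [Finset.mem_filter, Finset.mem_univ, true_and] at hp hq hp' hq'
    refine ⟨p, q + 1, fun r => ?_⟩
    split_ifs with hr
    · exact hc j p r q (Fin.le_def.2 hr.1) (Fin.le_def.2 (by omega)) hp hq
    · refine (h01 r j).resolve_right fun h1 => hr ⟨Fin.le_def.1 (hp' r h1), ?_⟩
      have := Fin.le_def.1 (hq' r h1)
      omega
  · refine ⟨0, 0, fun r => ?_⟩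
    simpa using (h01 r j).resolve_right fun h1 => h ⟨r, h1⟩

/-- Every interval matrix is totally unimodular: each square submatrix, obtained by
selecting a set of rows and an equally sized set of columns (given by injective index
maps), has determinant −1, 0, or 1. -/
theorem intervalMatrix_totallyUnimodular {m n : ℕ}
    (X : Matrix (Fin m) (Fin n) ℤ) (hX : IsIntervalMatrix X) :
    ∀ (k : ℕ) (f : Fin k → Fin m) (g : Fin k → Fin n),
      Function.Injective f → Function.Injective g →
      (X.submatrix f g).det = -1 ∨ (X.submatrix f g).det = 0 ∨
        (X.submatrix f g).det = 1 := by
  intro k f g _ _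
  choose a b hab using interval_exists_aux X hX
  have := interval_det_aux k (fun i => (f i : ℕ)) (fun j => a (g j)) (fun j => b (g j))
  have e : X.submatrix f g = Matrix.of fun i j =>
      if a (g j) ≤ (f i : ℕ) ∧ (f i : ℕ) < b (g j) then (1 : ℤ) else 0 := by
    ext i j
    exact hab (g j) (f i)
  rw [e]
  simpa using this
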